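/- arXiv:2210.00040 — 4 statements merged into one kernel-verified Lean document; each statement's English description precedes it below -/
import Mathlib

section
/- Let f, g : ℝⁿ → ℝⁿ and h : ℝⁿ → ℝˡ, and let ψ₁,…,ψ_M : ℝⁿ → ℝ be continuously differentiable observable functions with M > n. Assume: (1) for each i, the function x ↦ ∇ψᵢ(x)·f(x) lies in the real linear span of {ψ₁,…,ψ_M}; (2) for each i and each j ∈ {1,…,n}, the function x ↦ (∂ψᵢ/∂xⱼ)(x) gⱼ(x) lies in the real linear span of the constant function 1 together with {ψ₁,…,ψ_M}; (3) each component h_p of h lies in the real linear span of {ψ₁,…,ψ_M}. Then there exist a matrix A ∈ ℝ^{M×M}, a vector B ∈ ℝ^M, a matrix N ∈ ℝ^{M×M} and a matrix C ∈ ℝ^{l×M} such that: for every differentiable curve x : ℝ → ℝⁿ and continuous functions u, v : ℝ → ℝ satisfying x'(t) = f(x(t)) + g(x(t))·(u(t)+v(t)) for all t, the curve z(t) = Ψ(x(t)) = (ψ₁(x(t)),…,ψ_M(x(t))) satisfies z'(t) = A z(t) + B (u(t)+v(t)) + (u(t)+v(t)) · N z(t) for all t, and moreover h(x) = C Ψ(x)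 for all x ∈ ℝⁿ. -/
open Matrix

/-- The derivative of the observable `φ` along the vector field `f`, written `∇φ · f` in
coordinates; `φ ↦ lieDeriv 𝕜 f φ` is the Koopman generator of `ẋ = f x`. Like `fderiv`, it has the
junk value zero where `φ` is not differentiable. -/
noncomputable def lieDeriv (𝕜 : Type*) {E F : Type*} [NontriviallyNormedField 𝕜]
    [NormedAddCommGroup E] [NormedSpace 𝕜 E] [NormedAddCommGroup F] [NormedSpace 𝕜 F]
    (f : E → E) (φ : E → F) : E → F :=
  fun x => fderiv 𝕜 φ x (f x)

section Span

variable {R X ι κ : Type*} [Semiring R] [Fintype ι] {ψ : ι → X → R} {φ : κ → X → R}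

theorem exists_mulVec_eq_of_forall_mem_span_range
    (hφ : ∀ p, φ p ∈ Submodule.span R (Set.range ψ)) :
    ∃ C : Matrix κ ι R, ∀ x, (fun p => φ p x) = C *ᵥ fun i => ψ i x := by
  choose C hC using fun p => (Submodule.mem_span_range_iff_exists_fun R).1 (hφ p)
  refine ⟨C, fun x => funext fun p => ?_⟩
  simp [← hC p, mulVec, dotProduct]

theorem exists_add_mulVec_eq_of_forall_mem_span_insert_one
    (hφ : ∀ p, φ p ∈ Submodule.span R (insert (fun _ => 1) (Set.range ψ))) :
    ∃ (b : κ → R) (C : Matrix κ ι R), ∀ x, (fun p => φ p x) = b + C *ᵥ fun i => ψ i x := by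
  choose b φ₀ hφ₀ hφ_eq using fun p => Submodule.mem_span_insert.1 (hφ p)
  obtain ⟨C, hC⟩ := exists_mulVec_eq_of_forall_mem_span_range hφ₀
  refine ⟨b, C, fun x => funext fun p => ?_⟩
  simp [← hC x, hφ_eq p]

end Span

section LieDeriv

variable {𝕜 E F ι κ : Type*} [NontriviallyNormedField 𝕜] [NormedAddCommGroup E] [NormedSpace 𝕜 E]
  [NormedAddCommGroup F] [NormedSpace 𝕜 F]

theorem lieDeriv_eq_sum_smul_fderiv_single [Fintype κ] [DecidableEq κ]
    (g : (κ → 𝕜) → κ → 𝕜) (φ : (κ → 𝕜) → F) :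
    lieDeriv 𝕜 g φ = ∑ j, fun x => g x j • fderiv 𝕜 φ x (Pi.single j 1) := by
  funext x
  calc fderiv 𝕜 φ x (g x) = fderiv 𝕜 φ x (∑ j, g x j • Pi.single j 1) := by
        rw [← pi_eq_sum_univ']
    _ = ∑ j, g x j • fderiv 𝕜 φ x (Pi.single j 1) := by simp only [map_sum, map_smul]
    _ = (∑ j, fun y => g y j • fderiv 𝕜 φ y (Pi.single j 1)) x := by rw [Finset.sum_apply]

theorem lieDeriv_mem_of_forall_fderiv_single_mul_mem [Fintype κ] [DecidableEq κ]
    {S : Submodule 𝕜 ((κ → 𝕜) → 𝕜)} {g : (κ → 𝕜) → κ → 𝕜} {φ : (κ → 𝕜) → 𝕜}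
    (hφ : ∀ j, (fun x => fderiv 𝕜 φ x (Pi.single j 1) * g x j) ∈ S) :
    lieDeriv 𝕜 g φ ∈ S := by
  rw [lieDeriv_eq_sum_smul_fderiv_single]
  exact S.sum_mem fun j _ => by simpa only [smul_eq_mul, mul_comm] using hφ j

theorem hasDerivAt_comp_of_controlAffine {f g : E → E} {φ : E → F} {x : 𝕜 → E} {w t : 𝕜}
    (hφ : DifferentiableAt 𝕜 φ (x t)) (hx : HasDerivAt x (f (x t) + w • g (x t)) t) :
    HasDerivAt (fun s => φ (x s)) (lieDeriv 𝕜 f φ (x t) + w • lieDeriv 𝕜 g φ (x t)) t := by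
  simpa only [lieDeriv, map_add, map_smul, Function.comp_def] using
    hφ.hasFDerivAt.comp_hasDerivAt t hx

/-- The scalar `w` stands for the value of the total input `u + v` at time `t`. -/
theorem koopman_bilinear_representation_general [Fintype ι] {f g : E → E} {h : E → κ → 𝕜}
    {ψ : ι → E → 𝕜} (hψ : ∀ i, Differentiable 𝕜 (ψ i))
    (hf : ∀ i, lieDeriv 𝕜 f (ψ i) ∈ Submodule.span 𝕜 (Set.range ψ))
    (hg : ∀ i, lieDeriv 𝕜 g (ψ i) ∈ Submodule.span 𝕜 (insert (fun _ => 1) (Set.range ψ)))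
    (hh : ∀ p, (fun x => h x p) ∈ Submodule.span 𝕜 (Set.range ψ)) :
    ∃ (A : Matrix ι ι 𝕜) (B : ι → 𝕜) (N : Matrix ι ι 𝕜) (C : Matrix κ ι 𝕜),
      (∀ (x : 𝕜 → E) (w t : 𝕜), HasDerivAt x (f (x t) + w • g (x t)) t →
        HasDerivAt (fun s i => ψ i (x s))
          (A *ᵥ (fun i => ψ i (x t)) + w • B + w • N *ᵥ fun i => ψ i (x t)) t) ∧
      ∀ x, h x = C *ᵥ fun i => ψ i x := by
  obtain ⟨A, hA⟩ := exists_mulVec_eq_of_forall_mem_span_range hf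
  obtain ⟨B, N, hBN⟩ := exists_add_mulVec_eq_of_forall_mem_span_insert_one hg
  obtain ⟨C, hC⟩ := exists_mulVec_eq_of_forall_mem_span_range hh
  refine ⟨A, B, N, C, fun x w t hx => ?_, hC⟩
  rw [add_assoc, ← smul_add, ← hA, ← hBN, hasDerivAt_pi]
  exact fun i => hasDerivAt_comp_of_controlAffine (hψ i (x t)) hx

end LieDeriv

/-- Lemma 1: a finite dictionary of observables satisfying the Koopman-invariance
properties yields an equivalent bilinear representation
`ż = Az + B(u+v) + (u+v) N z`, `y = C Ψ(x)`. -/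
theorem koopman_bilinear_representation
    (n M l : ℕ) (hM : n < M)
    (f g : (Fin n → ℝ) → (Fin n → ℝ))
    (h : (Fin n → ℝ) → (Fin l → ℝ))
    (ψ : Fin M → (Fin n → ℝ) → ℝ)
    (hψ : ∀ i, ContDiff ℝ 1 (ψ i))
    (h1 : ∀ i, (fun x => fderiv ℝ (ψ i) x (f x)) ∈ Submodule.span ℝ (Set.range ψ))
    (h2 : ∀ (i : Fin M) (j : Fin n),
      (fun x => fderiv ℝ (ψ i) x (Pi.single j 1) * g x j) ∈
        Submodule.span ℝ (insert (fun _ => (1 : ℝ)) (Set.range ψ)))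
    (h3 : ∀ p : Fin l, (fun x => h x p) ∈ Submodule.span ℝ (Set.range ψ)) :
    ∃ (A : Matrix (Fin M) (Fin M) ℝ) (B : Fin M → ℝ)
      (N : Matrix (Fin M) (Fin M) ℝ) (C : Matrix (Fin l) (Fin M) ℝ),
      (∀ (x : ℝ → (Fin n → ℝ)) (u v : ℝ → ℝ), Continuous u → Continuous v →
        (∀ t, HasDerivAt x (f (x t) + (u t + v t) • g (x t)) t) →
        ∀ t, HasDerivAt (fun s => fun i => ψ i (x s))
          (A.mulVec (fun i => ψ i (x t)) + (u t + v t) • B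
            + (u t + v t) • N.mulVec (fun i => ψ i (x t))) t) ∧
      (∀ x, h x = C.mulVec fun i => ψ i x) := by
  obtain ⟨A, B, N, C, hz, hy⟩ := koopman_bilinear_representation_general
    (fun i => (hψ i).differentiable one_ne_zero) h1
    (fun i => lieDeriv_mem_of_forall_fderiv_single_mul_mem (h2 i)) h3
  exact ⟨A, B, N, C, fun x u v _ _ hx t => hz x (u t + v t) t (hx t), hy⟩
end

section
/- Let d ≥ 1, let W ∈ ℝ^{d×d} be symmetric positive definite, let T ∈ ℝ^{d×d} be symmetric, Y ∈ ℝ^{1×d}, and Ñ ∈ ℝ^{d×d}. Then the following are equivalent: (i) for every q ∈ ℝ^d with qᵀ W⁻¹ q ≤ 1, the symmetric matrix T + Yᵀ (Ñ q)ᵀ + (Ñ q) Y is negative definite; (ii) there exists ε > 0 such that the (d+1)×(d+1) symmetric block matrix [[T + ε Ñ W Ñᵀ, Yᵀ],[Y, −ε]] is negative definite. -/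
open Matrix

/-!
For fixed `x`, as `q` runs through the ellipsoid, `(Ñ q)ᵀ x` runs through exactly the reals `s` with
`s² ≤ xᵀ Ñ W Ñᵀ x`. Hence (i) says that on nonzero pairs `(x, s)` the quadratic form
`xᵀ T x + 2 s Y x` is negative wherever `xᵀ Ñ W Ñᵀ x - s²` is nonnegative, and the strict S-lemma
turns this into negative definiteness of the first form plus `ε` times the second, which is (ii).

The S-lemma itself, for forms `f` and `g`, asks for an `ε` with `f u / g u ≤ ε ≤ f v / g v` whenever
`g u < 0 < g v`. These bounds are compatible because `g` vanishes at two points of the line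
`u + ℝ v`, on either side of `u`, and `f` is nonnegative at both. Strictness is obtained by
compactness of the unit sphere, which leaves room to perturb `f` and `g` by a multiple of `‖v‖²`.
-/

section SLemma

variable {V : Type*} [AddCommGroup V] [Module ℝ V]

theorem quadraticForm_map_add_smul (f : QuadraticForm ℝ V) (u v : V) (t : ℝ) :
    f (u + t • v) = f u + t * QuadraticMap.polar f u v + t ^ 2 * f v := by
  rw [QuadraticMap.map_add f, QuadraticMap.map_smul, QuadraticMap.polar_smul_right, smul_eq_mul,
    smul_eq_mul]
  ring

theorem exists_neg_pos_roots_of_neg_of_pos {a c : ℝ} (b : ℝ) (ha : 0 < a) (hc : c < 0) :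
    ∃ r s : ℝ, r < 0 ∧ 0 < s ∧ ∀ t, c + t * b + t ^ 2 * a = a * (t - r) * (t - s) := by
  have hac : a * c < 0 := mul_neg_of_pos_of_neg ha hc
  set D := √(b ^ 2 - 4 * a * c)
  have hD_sq : D ^ 2 = b ^ 2 - 4 * a * c := Real.sq_sqrt (by linarith [sq_nonneg b])
  have hbD : |b| < D := abs_lt_of_sq_lt_sq (by linarith) (Real.sqrt_nonneg _)
  obtain ⟨hDb, hbD⟩ := abs_lt.1 hbD
  refine ⟨(-b - D) / (2 * a), (-b + D) / (2 * a), div_neg_of_neg_of_pos (by linarith) (by linarith),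
    div_pos (by linarith) (by linarith), fun t => ?_⟩
  field_simp
  linear_combination hD_sq

theorem quadraticForm_mul_le_mul_of_nonneg_imp_nonneg {f g : QuadraticForm ℝ V}
    (h : ∀ v, 0 ≤ g v → 0 ≤ f v) {u v : V} (hu : g u < 0) (hv : 0 < g v) :
    f v * g u ≤ f u * g v := by
  obtain ⟨r, s, hr, hs, hg⟩ :=
    exists_neg_pos_roots_of_neg_of_pos (QuadraticMap.polar g u v) hv hu
  have hf_root {t : ℝ} (ht : g v * (t - r) * (t - s) = 0) :
      0 ≤ f u + t * QuadraticMap.polar f u v + t ^ 2 * f v := by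
    rw [← quadraticForm_map_add_smul]
    refine h _ (ge_of_eq ?_)
    rw [quadraticForm_map_add_smul, hg, ht]
  -- The weights `s` and `-r` cancel the cross term `polar f u v`.
  have hcombination : 0 ≤ (s - r) * (f u - r * s * f v) := by
    have hfr := mul_nonneg hs.le (hf_root (t := r) (by ring))
    have hfs := mul_nonneg (neg_nonneg.2 hr.le) (hf_root (t := s) (by ring))
    linear_combination hfr + hfs
  have hfu : 0 ≤ f u - r * s * f v := nonneg_of_mul_nonneg_right hcombination (by linarith)
  have hgu : g u = g v * (r * s) := by linear_combination hg 0
  rw [hgu]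
  linear_combination g v * hfu

theorem exists_nonneg_forall_mul_le_of_nonneg_imp_nonneg {f g : QuadraticForm ℝ V}
    (h : ∀ v, 0 ≤ g v → 0 ≤ f v) {v₀ : V} (hv₀ : 0 < g v₀) :
    ∃ ε : ℝ, 0 ≤ ε ∧ ∀ v, ε * g v ≤ f v := by
  obtain ⟨ε, hlower, hupper⟩ := exists_between_of_forall_le
    (s := insert 0 ((fun u => f u / g u) '' {u | g u < 0}))
    (t := (fun v => f v / g v) '' {v | 0 < g v})
    (Set.insert_nonempty _ _) ⟨_, v₀, hv₀, rfl⟩ (by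
      rintro _ (rfl | ⟨u, hu, rfl⟩) _ ⟨v, hv, rfl⟩
      · exact div_nonneg (h v hv.le) hv.le
      · rw [le_div_iff₀ hv, div_mul_eq_mul_div, div_le_iff_of_neg hu]
        exact quadraticForm_mul_le_mul_of_nonneg_imp_nonneg h hu hv)
  refine ⟨ε, hlower (Set.mem_insert _ _), fun v => ?_⟩
  rcases lt_trichotomy (g v) 0 with hneg | hzero | hpos
  · exact (div_le_iff_of_neg hneg).1 (hlower (Or.inr ⟨v, hneg, rfl⟩))
  · simpa [hzero] using h v hzero.ge
  · exact (le_div_iff₀ hpos).1 (hupper ⟨v, hpos, rfl⟩)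

end SLemma

section NormedSpace

variable {E : Type*} [NormedAddCommGroup E] [NormedSpace ℝ E]

theorem exists_norm_eq_one_forall_mul_norm_sq_le [ProperSpace E] [Nontrivial E] {φ : E → ℝ}
    (hφ : Continuous φ) (hsmul : ∀ (t : ℝ) v, φ (t • v) = t ^ 2 * φ v) :
    ∃ w, ‖w‖ = 1 ∧ ∀ v, φ w * ‖v‖ ^ 2 ≤ φ v := by
  obtain ⟨w, hw, hmin⟩ := (isCompact_sphere (0 : E) 1).exists_isMinOn
    (NormedSpace.sphere_nonempty.2 zero_le_one) hφ.continuousOn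
  refine ⟨w, by simpa using hw, fun v => ?_⟩
  rcases eq_or_ne v 0 with rfl | hv
  · simpa using (hsmul 0 0).ge
  have hle : φ w ≤ φ (‖v‖⁻¹ • v) := hmin (by simp [norm_smul, hv])
  rwa [hsmul, inv_pow, inv_mul_eq_div, le_div_iff₀ (by positivity)] at hle

variable [FiniteDimensional ℝ E]

theorem continuous_quadraticForm (f : QuadraticForm ℝ E) : Continuous f := by
  have hf : ⇑f = fun v => QuadraticMap.associated f v v :=
    funext fun v => (QuadraticMap.associated_eq_self_apply ℝ f v).symm
  rw [hf]
  exact (LinearMap.toContinuousBilinearMap (QuadraticMap.associated f)).continuous₂.comp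
    (continuous_id.prodMk continuous_id)

variable [Nontrivial E]

theorem exists_pos_forall_mul_norm_sq_le_max {f g : QuadraticForm ℝ E}
    (h : ∀ v ≠ 0, 0 ≤ g v → 0 < f v) :
    ∃ δ : ℝ, 0 < δ ∧ ∀ v, δ * ‖v‖ ^ 2 ≤ max (f v) (-g v) := by
  obtain ⟨w, hw, hmin⟩ := exists_norm_eq_one_forall_mul_norm_sq_le
    (φ := fun v => max (f v) (-g v))
    ((continuous_quadraticForm f).max (continuous_quadraticForm g).neg)
    (fun t v => by
      rw [mul_max_of_nonneg _ _ (sq_nonneg t), QuadraticMap.map_smul, QuadraticMap.map_smul,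
        smul_eq_mul, smul_eq_mul, sq, mul_neg])
  refine ⟨_, ?_, hmin⟩
  rw [lt_max_iff, neg_pos]
  rcases lt_or_ge (g w) 0 with hneg | hnonneg
  · exact Or.inr hneg
  · exact Or.inl (h w (norm_ne_zero_iff.1 (by simp [hw])) hnonneg)

theorem exists_nonneg_posDef_sub_smul_of_mul_norm_sq_le_neg (f : QuadraticForm ℝ E)
    {g : QuadraticForm ℝ E} {δ : ℝ} (hδ : 0 < δ) (hg : ∀ v, δ * ‖v‖ ^ 2 ≤ -g v) :
    ∃ ε : ℝ, 0 ≤ ε ∧ (f - ε • g).PosDef := by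
  obtain ⟨w, -, hf⟩ := exists_norm_eq_one_forall_mul_norm_sq_le (continuous_quadraticForm f)
    (fun t v => by rw [QuadraticMap.map_smul, smul_eq_mul, sq])
  refine ⟨(|f w| + 1) / δ, by positivity, fun v hv => ?_⟩
  calc
    0 < (f w + |f w| + 1) * ‖v‖ ^ 2 :=
      mul_pos (by linarith [neg_abs_le (f w)]) (by positivity)
    _ = f w * ‖v‖ ^ 2 + (|f w| + 1) / δ * (δ * ‖v‖ ^ 2) := by field_simp; ring
    _ ≤ f v + (|f w| + 1) / δ * (-g v) := by gcongr; exacts [hf v, hg v]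
    _ = (f - ((|f w| + 1) / δ) • g) v := by simp; ring

end NormedSpace

section StrictSLemma

theorem exists_nonneg_posDef_sub_smul_of_innerProductSpace {E : Type*} [NormedAddCommGroup E]
    [InnerProductSpace ℝ E] [FiniteDimensional ℝ E] {f g : QuadraticForm ℝ E}
    (h : ∀ v ≠ 0, 0 ≤ g v → 0 < f v) : ∃ ε : ℝ, 0 ≤ ε ∧ (f - ε • g).PosDef := by
  rcases subsingleton_or_nontrivial E with _ | _
  · exact ⟨0, le_rfl, fun v hv => absurd (Subsingleton.elim v 0) hv⟩
  obtain ⟨δ, hδ, hmax⟩ := exists_pos_forall_mul_norm_sq_le_max h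
  let normSq : QuadraticForm ℝ E := LinearMap.BilinMap.toQuadraticMap (innerₗ E)
  let f' : QuadraticForm ℝ E := f - (δ / 2) • normSq
  let g' : QuadraticForm ℝ E := g + (δ / 2) • normSq
  have hf' (v : E) : f' v = f v - δ / 2 * ‖v‖ ^ 2 := by simp [f', normSq]
  have hg' (v : E) : g' v = g v + δ / 2 * ‖v‖ ^ 2 := by simp [g', normSq]
  by_cases! hslater : ∃ v₀, 0 < g' v₀
  · obtain ⟨v₀, hv₀⟩ := hslater
    have hnonneg (v : E) (hv : 0 ≤ g' v) : 0 ≤ f' v := by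
      rcases eq_or_ne v 0 with rfl | hv_ne
      · simp
      have hδv : 0 < δ * ‖v‖ ^ 2 := by positivity
      rw [hg'] at hv
      rw [hf']
      rcases le_max_iff.1 (hmax v) with hf | hg <;> linarith
    obtain ⟨ε, hε, hle⟩ := exists_nonneg_forall_mul_le_of_nonneg_imp_nonneg hnonneg hv₀
    refine ⟨ε, hε, fun v hv => ?_⟩
    calc
      0 < (1 + ε) * (δ / 2 * ‖v‖ ^ 2) := by positivity
      _ ≤ f v - ε * g v := by linarith [hle v, hf' v, congrArg (ε * ·) (hg' v)]
      _ = (f - ε • g) v := by simp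
  · exact exists_nonneg_posDef_sub_smul_of_mul_norm_sq_le_neg f (half_pos hδ) fun v => by
      linarith [hslater v, hg' v]

theorem forall_pos_of_nonneg_iff_exists_posDef_sub_smul {V : Type*} [AddCommGroup V] [Module ℝ V]
    [FiniteDimensional ℝ V] {f g : QuadraticForm ℝ V} :
    (∀ v ≠ 0, 0 ≤ g v → 0 < f v) ↔ ∃ ε : ℝ, 0 ≤ ε ∧ (f - ε • g).PosDef := by
  constructor
  · intro h
    let e : V ≃ₗ[ℝ] EuclideanSpace ℝ (Fin (Module.finrank ℝ V)) :=
      LinearEquiv.ofFinrankEq _ _ finrank_euclideanSpace_fin.symm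
    obtain ⟨ε, hε, hpos⟩ := exists_nonneg_posDef_sub_smul_of_innerProductSpace
      (f := f.comp e.symm.toLinearMap) (g := g.comp e.symm.toLinearMap)
      (fun v hv => h (e.symm v) (e.symm.map_ne_zero_iff.2 hv))
    exact ⟨ε, hε, fun v hv => by simpa using hpos (e v) (e.map_ne_zero_iff.2 hv)⟩
  · rintro ⟨ε, hε, hpos⟩ v hv hg
    have hdiff : 0 < f v - ε * g v := by simpa using hpos v hv
    linarith [mul_nonneg hε hg]

theorem forall_dotProduct_mulVec_neg_of_nonneg_iff {ι : Type*} [Fintype ι] (A B : Matrix ι ι ℝ) :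
    (∀ v : ι → ℝ, v ≠ 0 → 0 ≤ v ⬝ᵥ B *ᵥ v → v ⬝ᵥ A *ᵥ v < 0) ↔
      ∃ ε : ℝ, 0 ≤ ε ∧ ∀ v : ι → ℝ, v ≠ 0 → v ⬝ᵥ (A + ε • B) *ᵥ v < 0 := by
  classical
  have hform (M : Matrix ι ι ℝ) (v : ι → ℝ) : M.toQuadraticForm' v = v ⬝ᵥ M *ᵥ v := by
    simp [toQuadraticForm', toLinearMap₂'_apply']
  simpa [QuadraticMap.PosDef, hform, add_mulVec, smul_mulVec, dotProduct_add, lt_neg_iff_add_neg',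
    add_comm] using forall_pos_of_nonneg_iff_exists_posDef_sub_smul
      (f := -A.toQuadraticForm') (g := B.toQuadraticForm')

end StrictSLemma

section Symmetric

variable {m R : Type*}

theorem isSymm_add_iff_of_isSymm_right [AddCommGroup R] {A B : Matrix m m R} (hB : B.IsSymm) :
    (A + B).IsSymm ↔ A.IsSymm :=
  ⟨fun h => by simpa using h.sub hB, fun h => h.add hB⟩

theorem isSymm_add_vecMulVec_add_vecMulVec_iff [CommRing R] {T : Matrix m m R} (y p : m → R) :
    (T + vecMulVec y p + vecMulVec p y).IsSymm ↔ T.IsSymm := by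
  rw [add_assoc, ← transpose_vecMulVec y p]
  exact isSymm_add_iff_of_isSymm_right (isSymm_add_transpose_self _)

theorem dotProduct_add_vecMulVec_add_vecMulVec_mulVec [CommSemiring R] [Fintype m]
    (T : Matrix m m R) (y p x : m → R) :
    x ⬝ᵥ (T + vecMulVec y p + vecMulVec p y) *ᵥ x =
      x ⬝ᵥ T *ᵥ x + 2 * (p ⬝ᵥ x) * (y ⬝ᵥ x) := by
  simp only [add_mulVec, dotProduct_add, vecMulVec_mulVec, op_smul_eq_smul, dotProduct_smul,
    smul_eq_mul, dotProduct_comm x y, dotProduct_comm x p]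
  ring

theorem posDef_neg_iff_isSymm_and_forall_neg [Fintype m] {M : Matrix m m ℝ} :
    (-M).PosDef ↔ M.IsSymm ∧ ∀ x : m → ℝ, x ≠ 0 → x ⬝ᵥ M *ᵥ x < 0 := by
  simp [posDef_iff_dotProduct_mulVec, IsHermitian, IsSymm, conjTranspose_eq_transpose_of_trivial,
    neg_mulVec]

end Symmetric

section Bordered

variable {m R : Type*}

/-- The bordered matrix `[[P, y], [yᵀ, c]]`, a symmetric extension of `P` by one row and one column.
The added index is `Sum.inr 0`. -/
def bordered (P : Matrix m m R) (y : m → R) (c : R) : Matrix (m ⊕ Fin 1) (m ⊕ Fin 1) R :=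
  fromBlocks P (replicateCol (Fin 1) y) (replicateRow (Fin 1) y) (of fun _ _ => c)

theorem isSymm_bordered_iff {P : Matrix m m R} {y : m → R} {c : R} :
    (bordered P y c).IsSymm ↔ P.IsSymm := by
  simp [bordered, IsSymm.ext_iff]

theorem bordered_add_smul_bordered [Ring R] (P Q : Matrix m m R) (y : m → R) (ε : R) :
    bordered P y 0 + ε • bordered Q 0 (-1) = bordered (P + ε • Q) y (-ε) := by
  ext (i | i) (j | j) <;> simp [bordered]

theorem dotProduct_bordered_mulVec [CommSemiring R] [Fintype m] (P : Matrix m m R) (y x : m → R)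
    (c s : R) :
    Sum.elim x (fun _ => s) ⬝ᵥ bordered P y c *ᵥ Sum.elim x (fun _ => s) =
      x ⬝ᵥ P *ᵥ x + 2 * s * (y ⬝ᵥ x) + c * s ^ 2 := by
  have hcol : replicateCol (Fin 1) y *ᵥ (fun _ => s) = s • y := by
    ext
    simp [mulVec, dotProduct, mul_comm]
  have hrow : replicateRow (Fin 1) y *ᵥ x = fun _ => y ⬝ᵥ x := rfl
  have hcorner : (of fun _ _ => c : Matrix (Fin 1) (Fin 1) R) *ᵥ (fun _ => s) = fun _ => c * s := by
    ext
    simp [mulVec, dotProduct]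
  have hfin_one (a b : R) : (fun _ : Fin 1 => a) ⬝ᵥ (fun _ => b) = a * b := by simp [dotProduct]
  rw [bordered, fromBlocks_mulVec, Sum.elim_comp_inl, Sum.elim_comp_inr, hcol, hrow, hcorner,
    sumElim_dotProduct_sumElim, dotProduct_add, dotProduct_add, dotProduct_smul, hfin_one, hfin_one,
    dotProduct_comm x y, smul_eq_mul]
  ring

theorem exists_eq_sumElim_const (v : m ⊕ Fin 1 → R) : ∃ x s, v = Sum.elim x fun _ => s :=
  ⟨v ∘ Sum.inl, v (Sum.inr 0), by
    ext (i | i)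
    · rfl
    · rw [Subsingleton.elim i 0, Sum.elim_inr]⟩

end Bordered

section Ellipsoid

variable {n : Type*} [Fintype n] [DecidableEq n] {W : Matrix n n ℝ}

theorem dotProduct_sq_le_mul_inv_of_posDef (hW : W.PosDef) (u q : n → ℝ) :
    (u ⬝ᵥ q) ^ 2 ≤ (u ⬝ᵥ W *ᵥ u) * (q ⬝ᵥ W⁻¹ *ᵥ q) := by
  have hWq : W *ᵥ W⁻¹ *ᵥ q = q := by
    rw [mulVec_mulVec, mul_nonsing_inv _ ((isUnit_iff_isUnit_det W).1 hW.isUnit), one_mulVec]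
  have hnonneg (x : n → ℝ) : 0 ≤ W.toBilin' x x := by
    simpa [toBilin'_apply'] using hW.posSemidef.dotProduct_mulVec_nonneg x
  have hsymm : W.toBilin'.IsSymm := isSymm_toBilin'_iff_isSymm.2 (by simpa using hW.isHermitian)
  simpa only [toBilin'_apply', hWq, dotProduct_comm (W⁻¹ *ᵥ q) q] using
    LinearMap.BilinForm.apply_sq_le_of_symm _ hnonneg ⟨hsymm.eq⟩ u (W⁻¹ *ᵥ q)

theorem exists_mem_ellipsoid_dotProduct_eq_iff (hW : W.PosDef) (u : n → ℝ) (s : ℝ) :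
    (∃ q : n → ℝ, q ⬝ᵥ W⁻¹ *ᵥ q ≤ 1 ∧ u ⬝ᵥ q = s) ↔ s ^ 2 ≤ u ⬝ᵥ W *ᵥ u := by
  have hnonneg : 0 ≤ u ⬝ᵥ W *ᵥ u := by
    simpa using hW.posSemidef.dotProduct_mulVec_nonneg u
  constructor
  · rintro ⟨q, hq, rfl⟩
    exact (dotProduct_sq_le_mul_inv_of_posDef hW u q).trans (mul_le_of_le_one_right hnonneg hq)
  · intro hs
    have hWu : W⁻¹ *ᵥ W *ᵥ u = u := by
      rw [mulVec_mulVec, nonsing_inv_mul _ ((isUnit_iff_isUnit_det W).1 hW.isUnit), one_mulVec]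
    have hs_zero (h : u ⬝ᵥ W *ᵥ u = 0) : s = 0 := by simpa [h, sq_nonpos_iff] using hs
    -- The maximiser direction `W u`; for `u = 0` the coefficient is `s / 0 = 0`.
    let t := s / (u ⬝ᵥ W *ᵥ u)
    have ht : t * (u ⬝ᵥ W *ᵥ u) = s := div_mul_cancel_of_imp hs_zero
    refine ⟨t • W *ᵥ u, ?_, by rw [dotProduct_smul, smul_eq_mul, ht]⟩
    calc
      (t • W *ᵥ u) ⬝ᵥ W⁻¹ *ᵥ (t • W *ᵥ u) = t * (t * (u ⬝ᵥ W *ᵥ u)) := by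
        rw [mulVec_smul, hWu, smul_dotProduct, dotProduct_smul, dotProduct_comm, smul_eq_mul,
          smul_eq_mul]
      _ = s ^ 2 / (u ⬝ᵥ W *ᵥ u) := by rw [ht, div_mul_eq_mul_div, sq]
      _ ≤ 1 := div_le_one_of_le₀ hs hnonneg

end Ellipsoid

section Petersen

variable {m n : Type*} [Fintype m] [Fintype n] {W : Matrix n n ℝ}

theorem dotProduct_bordered_mul_mul_transpose_nonneg_iff (W : Matrix n n ℝ) (N : Matrix m n ℝ)
    (x : m → ℝ) (s : ℝ) :
    0 ≤ Sum.elim x (fun _ => s) ⬝ᵥ bordered (N * W * Nᵀ) 0 (-1) *ᵥ Sum.elim x (fun _ => s) ↔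
      s ^ 2 ≤ (Nᵀ *ᵥ x) ⬝ᵥ W *ᵥ (Nᵀ *ᵥ x) := by
  have hcongruence : x ⬝ᵥ (N * W * Nᵀ) *ᵥ x = (Nᵀ *ᵥ x) ⬝ᵥ W *ᵥ (Nᵀ *ᵥ x) := by
    rw [← mulVec_mulVec, ← mulVec_mulVec, dotProduct_mulVec, ← mulVec_transpose]
  rw [dotProduct_bordered_mulVec, hcongruence, zero_dotProduct, mul_zero, add_zero, neg_one_mul,
    ← sub_eq_add_neg, sub_nonneg]

theorem posDef_neg_bordered_add_smul_iff (hW : W.IsSymm) (T : Matrix m m ℝ) (N : Matrix m n ℝ)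
    (Y : m → ℝ) (ε : ℝ) :
    (-bordered (T + ε • (N * W * Nᵀ)) Y (-ε)).PosDef ↔
      T.IsSymm ∧ ∀ v : m ⊕ Fin 1 → ℝ, v ≠ 0 →
        v ⬝ᵥ bordered (T + ε • (N * W * Nᵀ)) Y (-ε) *ᵥ v < 0 := by
  have hNWN : (N * W * Nᵀ).IsSymm := by
    simp [IsSymm, transpose_mul, hW.eq, Matrix.mul_assoc]
  rw [posDef_neg_iff_isSymm_and_forall_neg, isSymm_bordered_iff,
    isSymm_add_iff_of_isSymm_right (hNWN.smul ε)]

variable [DecidableEq n]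

theorem forall_ellipsoid_posDef_neg_iff (W : Matrix n n ℝ) (T : Matrix m m ℝ) (N : Matrix m n ℝ)
    (Y : m → ℝ) :
    (∀ q : n → ℝ, q ⬝ᵥ W⁻¹ *ᵥ q ≤ 1 →
        (-(T + vecMulVec Y (N *ᵥ q) + vecMulVec (N *ᵥ q) Y)).PosDef) ↔
      T.IsSymm ∧ ∀ q : n → ℝ, q ⬝ᵥ W⁻¹ *ᵥ q ≤ 1 → ∀ x : m → ℝ, x ≠ 0 →
        x ⬝ᵥ (T + vecMulVec Y (N *ᵥ q) + vecMulVec (N *ᵥ q) Y) *ᵥ x < 0 := by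
  simp only [posDef_neg_iff_isSymm_and_forall_neg, isSymm_add_vecMulVec_add_vecMulVec_iff,
    forall_and]
  exact and_congr_left' ⟨fun h => h 0 (by simp), fun h _ _ => h⟩

theorem forall_ellipsoid_neg_iff_forall_bordered_neg (hW : W.PosDef) (T : Matrix m m ℝ)
    (N : Matrix m n ℝ) (Y : m → ℝ) :
    (∀ q : n → ℝ, q ⬝ᵥ W⁻¹ *ᵥ q ≤ 1 → ∀ x : m → ℝ, x ≠ 0 →
        x ⬝ᵥ (T + vecMulVec Y (N *ᵥ q) + vecMulVec (N *ᵥ q) Y) *ᵥ x < 0) ↔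
      ∀ v : m ⊕ Fin 1 → ℝ, v ≠ 0 → 0 ≤ v ⬝ᵥ bordered (N * W * Nᵀ) 0 (-1) *ᵥ v →
        v ⬝ᵥ bordered T Y 0 *ᵥ v < 0 := by
  have hform (q : n → ℝ) (x : m → ℝ) :
      x ⬝ᵥ (T + vecMulVec Y (N *ᵥ q) + vecMulVec (N *ᵥ q) Y) *ᵥ x =
        Sum.elim x (fun _ => Nᵀ *ᵥ x ⬝ᵥ q) ⬝ᵥ
          bordered T Y 0 *ᵥ Sum.elim x (fun _ => Nᵀ *ᵥ x ⬝ᵥ q) := by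
    rw [dotProduct_add_vecMulVec_add_vecMulVec_mulVec, dotProduct_bordered_mulVec, zero_mul,
      add_zero, dotProduct_comm (N *ᵥ q), dotProduct_mulVec x N, mulVec_transpose]
  constructor
  · intro h v hv hv_nonneg
    obtain ⟨x, s, rfl⟩ := exists_eq_sumElim_const v
    rw [dotProduct_bordered_mul_mul_transpose_nonneg_iff] at hv_nonneg
    have hx : x ≠ 0 := by
      rintro rfl
      have hs : s = 0 := by simpa [sq_nonpos_iff] using hv_nonneg
      exact hv (by ext (i | i) <;> simp [hs])
    obtain ⟨q, hq, rfl⟩ := (exists_mem_ellipsoid_dotProduct_eq_iff hW _ _).2 hv_nonneg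
    exact hform q x ▸ h q hq x hx
  · intro h q hq x hx
    rw [hform]
    exact h _ (fun hzero => hx (by simpa using congrArg (· ∘ Sum.inl) hzero))
      ((dotProduct_bordered_mul_mul_transpose_nonneg_iff _ _ _ _).2
        ((exists_mem_ellipsoid_dotProduct_eq_iff hW _ _).1 ⟨q, hq, rfl⟩))

end Petersen

theorem petersen_lemma_ellipsoid_general {m n : Type*} [Finite m] [Fintype n] [DecidableEq n]
    {W : Matrix n n ℝ} (hW : W.PosDef) (T : Matrix m m ℝ) (N : Matrix m n ℝ) (Y : m → ℝ) :
    (∀ q : n → ℝ, q ⬝ᵥ W⁻¹ *ᵥ q ≤ 1 →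
        (-(T + vecMulVec Y (N *ᵥ q) + vecMulVec (N *ᵥ q) Y)).PosDef) ↔
      ∃ ε : ℝ, 0 < ε ∧ (-bordered (T + ε • (N * W * Nᵀ)) Y (-ε)).PosDef := by
  cases nonempty_fintype m
  have hW_symm : W.IsSymm := by simpa using hW.isHermitian
  have hε_pos (ε : ℝ) (h : (-bordered (T + ε • (N * W * Nᵀ)) Y (-ε)).PosDef) : 0 < ε := by
    simpa [bordered] using h.diag_pos (i := Sum.inr 0)
  rw [forall_ellipsoid_posDef_neg_iff, forall_ellipsoid_neg_iff_forall_bordered_neg hW,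
    forall_dotProduct_mulVec_neg_of_nonneg_iff]
  simp only [bordered_add_smul_bordered, ← exists_and_left, and_left_comm (a := T.IsSymm),
    ← posDef_neg_bordered_add_smul_iff hW_symm]
  exact exists_congr fun ε => ⟨fun h => ⟨hε_pos ε h.2, h.2⟩, fun h => ⟨h.1.le, h.2⟩⟩

/-- Petersen-type lemma: negative definiteness of the state-dependent matrix
`T + Yᵀ (Ñ q)ᵀ + (Ñ q) Y` over the ellipsoid `{q : qᵀ W⁻¹ q ≤ 1}` is
equivalent to the existence of `ε > 0` such that the block matrix
`[[T + ε Ñ W Ñᵀ, Yᵀ],[Y, −ε]]` is negative definite. -/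
theorem petersen_lemma_ellipsoid
    (d : ℕ) (hd : 1 ≤ d)
    (W T Nt : Matrix (Fin d) (Fin d) ℝ) (Y : Fin d → ℝ)
    (hW : W.PosDef) (hT : T.IsSymm) :
    (∀ q : Fin d → ℝ, q ⬝ᵥ W⁻¹.mulVec q ≤ 1 →
      (-(T + Matrix.vecMulVec Y (Nt.mulVec q) + Matrix.vecMulVec (Nt.mulVec q) Y)).PosDef)
    ↔ (∃ ε : ℝ, 0 < ε ∧
      (-(Matrix.fromBlocks (T + ε • (Nt * W * Ntᵀ))
          (Matrix.of fun i (_ : Fin 1) => Y i)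
          (Matrix.of fun (_ : Fin 1) j => Y j)
          (Matrix.of fun (_ : Fin 1) (_ : Fin 1) => -ε))).PosDef) :=
  petersen_lemma_ellipsoid_general hW T Nt Y
end

section
/- (Proposition 1.) Consider the bilinear system ż = Az + B(u+v) + (u+v)Nz, y = Cz (A, N ∈ ℝ^{M×M}, B ∈ ℝ^M, C ∈ ℝ^{l×M}), with matched disturbance v generated by the exosystem ẇ = Sw, v = Ew (S ∈ ℝ^{r×r}, E ∈ ℝ^{1×r}), and the linear dynamic output feedback controller ξ' = Fξ + Gy, u = Hξ + Γy (F ∈ ℝ^{ν×ν}, G ∈ ℝ^{ν×l}, H ∈ ℝ^{1×ν}, Γ ∈ ℝ^{1×l}). Let A_c = [[A + BΓC, BH],[GC, F]] ∈ ℝ^{(M+ν)×(M+ν)}, Ñ = [[N,0],[0,0]], H̃ = [ΓC, H]. Suppose: (1) there exists Σ ∈ ℝ^{ν×r} with Σ S = F Σ; (2) H Σ + E = 0; (3) there exist ε > 0 and a symmetric positive definite W ∈ ℝ^{(M+ν)×(M+ν)} such that the block matrix [[W A_cᵀ + A_c W + ε Ñ W Ñᵀ, W H̃ᵀ],[H̃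 W, −ε]] is negative definite. Then for every differentiable triple (z, ξ, w) : [0,∞) → ℝ^M × ℝ^ν × ℝ^r satisfying the closed-loop equations z' = Az + B(Hξ + ΓCz + Ew) + (Hξ + ΓCz + Ew)·Nz, ξ' = Fξ + G C z, w' = Sw, with initial condition p(0) = (z(0), ξ(0) − Σ w(0)) satisfying p(0)ᵀ W⁻¹ p(0) ≤ 1, it holds that (z(t), ξ(t) − Σ w(t)) → 0 and in particular the output y(t) = C z(t) → 0 as t → ∞. -/
open Matrix

/-!
The function `V(p) = pᵀ W⁻¹ p` is a Lyapunov function for the error `p = (z, ξ - Σ w)`. The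
internal model condition and `H Σ + E = 0` make the error autonomous, `p' = A_c p + (H̃ p) Ñ p`.
Along it, with `q = W⁻¹ p`, the bilinear contribution to `V'` is a mixed product for the form `W`,
so Young's inequality bounds it by `ε qᵀ Ñ W Ñᵀ q + ε⁻¹ (H̃ p)² V(p)`. On the ellipsoid `V ≤ 1` the
factor `V(p)` can be dropped, and what remains is the quadratic form of the Schur complement of the
matrix inequality. Hence `V' ≤ -c V` there for some `c > 0`, which makes the ellipsoid invariant and
`V` decay exponentially.
-/

open Filter Topology
open Set (Icc Icc_subset_Ici_self Ici Ici_subset_Ici Ico Ico_subset_Icc_self)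

section PosDef

variable {n : Type*} [Fintype n]

lemma dotProduct_mulVec_comm_of_isSymm {R : Type*} [CommSemiring R] {P : Matrix n n R}
    (hP : P.IsSymm) (x y : n → R) : x ⬝ᵥ P *ᵥ y = y ⬝ᵥ P *ᵥ x := by
  rw [dotProduct_mulVec, ← mulVec_transpose, hP.eq, dotProduct_comm]

lemma posDef_schurComplement_of_posDef_fromBlocks {m K : Type*} [Finite m] [Field K]
    [PartialOrder K] [StarRing K] [DecidableEq n]
    {A : Matrix m m K} {B : Matrix m n K} {D : Matrix n n K}
    (h : (fromBlocks A B Bᴴ D).PosDef) : (A - B * D⁻¹ * Bᴴ).PosDef := by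
  have := Fintype.ofFinite m
  have hD : D.PosDef := h.submatrix Sum.inr_injective
  let _ : Invertible D := hD.isUnit.invertible
  refine .of_dotProduct_mulVec_pos ((IsHermitian.fromBlocks₂₂ A B hD.1).1 h.1) fun x hx => ?_
  have hne : Sum.elim x (-((D⁻¹ * Bᴴ) *ᵥ x)) ≠ 0 := fun h0 =>
    hx (funext fun i => congrFun h0 (Sum.inl i))
  have hpos := h.dotProduct_mulVec_pos hne
  rwa [dotProduct_mulVec, schur_complement_eq₂₂ A B _ _ hD.1, add_neg_cancel, dotProduct_zero,
    zero_add, ← dotProduct_mulVec] at hpos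

lemma posDef_sub_inv_smul_vecMulVec_of_posDef_fromBlocks {m : Type*} [Finite m]
    {X : Matrix m m ℝ} {b : m → ℝ} {ε : ℝ}
    (h : (fromBlocks X (replicateCol (Fin 1) b) (replicateRow (Fin 1) b)
      (of fun _ _ => ε)).PosDef) : (X - ε⁻¹ • vecMulVec b b).PosDef := by
  have hrow : (replicateCol (Fin 1) b)ᴴ = replicateRow (Fin 1) b := by simp
  have hschur : ε⁻¹ • vecMulVec b b = replicateCol (Fin 1) b *
      (of fun _ _ => ε : Matrix (Fin 1) (Fin 1) ℝ)⁻¹ * (replicateCol (Fin 1) b)ᴴ := by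
    ext i j
    simp only [hrow, Matrix.inv_subsingleton, Ring.inverse_eq_inv', mul_apply, Matrix.smul_apply,
      vecMulVec_apply, Fin.sum_univ_one, replicateCol_apply, replicateRow_apply, of_apply,
      diagonal_apply_eq, smul_eq_mul]
    ring
  rw [hschur]
  exact posDef_schurComplement_of_posDef_fromBlocks (hrow ▸ h)

lemma exists_pos_mul_dotProduct_mulVec_le {Q : Matrix n n ℝ} (hQ : Q.PosDef) (R : Matrix n n ℝ) :
    ∃ c > 0, ∀ x, c * (x ⬝ᵥ R *ᵥ x) ≤ x ⬝ᵥ Q *ᵥ x := by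
  have hpos : ∀ x, x ≠ 0 → 0 < x ⬝ᵥ Q *ᵥ x := fun x hx => hQ.dotProduct_mulVec_pos hx
  have hcont : ContinuousOn (fun x : n → ℝ => (x ⬝ᵥ R *ᵥ x) / (x ⬝ᵥ Q *ᵥ x))
      (Metric.sphere 0 1) :=
    ContinuousOn.div (by fun_prop) (by fun_prop) fun x hx =>
      (hpos x (ne_zero_of_mem_unit_sphere ⟨x, hx⟩)).ne'
  obtain ⟨K, hK⟩ := (isCompact_sphere (0 : n → ℝ) 1).exists_bound_of_continuousOn hcont
  refine ⟨(max K 1)⁻¹, by positivity, fun x => ?_⟩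
  rcases eq_or_ne x 0 with rfl | hx
  · simp
  have hratio : (x ⬝ᵥ R *ᵥ x) / (x ⬝ᵥ Q *ᵥ x) ≤ K := by
    have hnorm : ‖x‖⁻¹ ≠ 0 := inv_ne_zero (norm_ne_zero_iff.2 hx)
    have hunit := (le_abs_self _).trans (hK (‖x‖⁻¹ • x) (by simp [norm_smul, hx]))
    simpa only [mulVec_smul, smul_dotProduct, dotProduct_smul, smul_eq_mul,
      mul_div_mul_left _ _ hnorm] using hunit
  rw [inv_mul_le_iff₀ (by positivity), ← div_le_iff₀ (hpos x hx)]
  exact hratio.trans (le_max_left K 1)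

lemma two_mul_dotProduct_mulVec_le {P : Matrix n n ℝ} (hP : P.PosSemidef) {ε : ℝ} (hε : 0 < ε)
    (a b : n → ℝ) :
    2 * (a ⬝ᵥ P *ᵥ b) ≤ ε * (a ⬝ᵥ P *ᵥ a) + ε⁻¹ * (b ⬝ᵥ P *ᵥ b) := by
  have hsq : 0 ≤ (ε • a - b) ⬝ᵥ P *ᵥ (ε • a - b) := hP.dotProduct_mulVec_nonneg _
  have hcomm := dotProduct_mulVec_comm_of_isSymm (isHermitian_iff_isSymm.1 hP.isHermitian) b a
  have hexpand : (ε • a - b) ⬝ᵥ P *ᵥ (ε • a - b) =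
      ε * (ε * (a ⬝ᵥ P *ᵥ a) + ε⁻¹ * (b ⬝ᵥ P *ᵥ b) - 2 * (a ⬝ᵥ P *ᵥ b)) := by
    simp only [mulVec_sub, mulVec_smul, sub_dotProduct, dotProduct_sub, smul_dotProduct,
      dotProduct_smul, smul_eq_mul, hcomm]
    field_simp
    ring
  rw [hexpand] at hsq
  exact sub_nonneg.1 (nonneg_of_mul_nonneg_right hsq hε)

lemma tendsto_zero_of_tendsto_dotProduct_mulVec_zero {P : Matrix n n ℝ} (hP : P.PosDef)
    {ι : Type*} {l : Filter ι} {p : ι → n → ℝ}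
    (h : Tendsto (fun i => p i ⬝ᵥ P *ᵥ p i) l (𝓝 0)) : Tendsto p l (𝓝 0) := by
  classical
  obtain ⟨c, hc, hle⟩ := exists_pos_mul_dotProduct_mulVec_le hP 1
  refine tendsto_pi_nhds.2 fun j => ?_
  have hsq : Tendsto (fun i => p i j ^ 2) l (𝓝 0) := by
    refine squeeze_zero (fun i => sq_nonneg _) (fun i => ?_) (by simpa using h.const_mul c⁻¹)
    calc p i j ^ 2 = p i j * p i j := sq _
      _ ≤ p i ⬝ᵥ p i := Finset.single_le_sum (f := fun k => p i k * p i k)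
          (fun k _ => mul_self_nonneg _) (Finset.mem_univ j)
      _ ≤ c⁻¹ * (p i ⬝ᵥ P *ᵥ p i) := by
          rw [le_inv_mul_iff₀ hc]
          simpa only [one_mulVec] using hle (p i)
  rw [Pi.zero_apply, tendsto_zero_iff_abs_tendsto_zero]
  simpa [Function.comp_def, Real.sqrt_sq_eq_abs] using hsq.sqrt

end PosDef

section Lyapunov

variable {n : Type*} [Fintype n]

lemma hasDerivWithinAt_mulVec {m : Type*} [Finite m] (P : Matrix m n ℝ) {p : ℝ → n → ℝ}
    {p' : n → ℝ} {s : Set ℝ} {t : ℝ} (hp : HasDerivWithinAt p p' s t) :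
    HasDerivWithinAt (fun t => P *ᵥ p t) (P *ᵥ p') s t :=
  have := Fintype.ofFinite m
  P.mulVecLin.toContinuousLinearMap.hasFDerivAt.comp_hasDerivWithinAt t hp

lemma hasDerivWithinAt_dotProduct_mulVec_self {P : Matrix n n ℝ} (hP : P.IsSymm) {p : ℝ → n → ℝ}
    {p' : n → ℝ} {s : Set ℝ} {t : ℝ} (hp : HasDerivWithinAt p p' s t) :
    HasDerivWithinAt (fun t => p t ⬝ᵥ P *ᵥ p t) (2 * (P *ᵥ p t ⬝ᵥ p')) s t := by
  have hprod : HasDerivWithinAt (fun t => p t ⬝ᵥ P *ᵥ p t)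
      (p' ⬝ᵥ P *ᵥ p t + p t ⬝ᵥ P *ᵥ p') s t := by
    simp only [dotProduct, ← Finset.sum_add_distrib]
    exact HasDerivWithinAt.fun_sum fun i _ => (hasDerivWithinAt_pi.1 hp i).mul
      (hasDerivWithinAt_pi.1 (hasDerivWithinAt_mulVec P hp) i)
  rwa [dotProduct_mulVec_comm_of_isSymm hP (p t), ← two_mul, dotProduct_comm p'] at hprod

lemma le_mul_exp_of_deriv_le_neg_mul_of_le {V V' : ℝ → ℝ} {c R : ℝ} (hc : 0 < c) (hR : 0 < R)
    (hV : ∀ t ≥ 0, HasDerivWithinAt V (V' t) (Ici 0) t)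
    (hdecay : ∀ t ≥ 0, V t ≤ R → V' t ≤ -c * V t) (h0 : V 0 ≤ R) {t : ℝ} (ht : 0 ≤ t) :
    V t ≤ V 0 * Real.exp (-c * t) := by
  have hcont : ContinuousOn V (Icc 0 t) := fun x hx =>
    (hV x hx.1).continuousWithinAt.mono Icc_subset_Ici_self
  have hright : ∀ x ∈ Ico 0 t, HasDerivWithinAt V (V' x) (Ici x) x := fun x hx =>
    (hV x hx.1).mono (Ici_subset_Ici.2 hx.1)
  have hinvariant : ∀ x ∈ Icc 0 t, V x ≤ R := by
    refine image_le_of_deriv_right_lt_deriv_boundary hcont hright h0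
      (fun x => hasDerivAt_const x R) fun x hx hx_eq => ?_
    calc V' x ≤ -c * V x := hdecay x hx.1 hx_eq.le
      _ = -c * R := by rw [hx_eq]
      _ < 0 := mul_neg_of_neg_of_pos (neg_neg_of_pos hc) hR
  have hgronwall := le_gronwallBound_of_liminf_deriv_right_le hcont
    (fun x hx r hr => (hright x hx).liminf_right_slope_le hr) (le_refl (V 0)) (K := -c) (ε := 0)
    (fun x hx => by simpa using hdecay x hx.1 (hinvariant x (Ico_subset_Icc_self hx)))
    t ⟨ht, le_rfl⟩
  rwa [gronwallBound_ε0, sub_zero] at hgronwall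

theorem tendsto_zero_of_lyapunov_decay {P : Matrix n n ℝ} (hP : P.PosDef)
    {f : (n → ℝ) → n → ℝ} {c R : ℝ} (hc : 0 < c) (hR : 0 < R)
    (hdecay : ∀ x, x ⬝ᵥ P *ᵥ x ≤ R → 2 * (P *ᵥ x ⬝ᵥ f x) ≤ -c * (x ⬝ᵥ P *ᵥ x))
    {p : ℝ → n → ℝ} (hp : ∀ t ≥ 0, HasDerivWithinAt p (f (p t)) (Ici 0) t)
    (h0 : p 0 ⬝ᵥ P *ᵥ p 0 ≤ R) : Tendsto p atTop (𝓝 0) := by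
  have hsymm : P.IsSymm := isHermitian_iff_isSymm.1 hP.isHermitian
  have hexp : Tendsto (fun t => Real.exp (-c * t)) atTop (𝓝 0) :=
    Real.tendsto_exp_comp_nhds_zero.2 (tendsto_id.const_mul_atTop_of_neg (neg_neg_of_pos hc))
  refine tendsto_zero_of_tendsto_dotProduct_mulVec_zero hP <|
    squeeze_zero' (.of_forall fun t => hP.posSemidef.dotProduct_mulVec_nonneg (p t)) ?_
      (by simpa only [mul_zero] using hexp.const_mul (p 0 ⬝ᵥ P *ᵥ p 0))
  filter_upwards [eventually_ge_atTop 0] with t ht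
  exact le_mul_exp_of_deriv_le_neg_mul_of_le hc hR
    (fun t ht => hasDerivWithinAt_dotProduct_mulVec_self hsymm (hp t ht))
    (fun t _ => hdecay (p t)) h0 ht

end Lyapunov

section Bilinear

variable {n : Type*} [Fintype n]

/-- The vector field `p ↦ A p + (h · p) N p` of a bilinear system whose scalar input is the linear
feedback `h · p`. -/
def bilinearField (A N : Matrix n n ℝ) (h p : n → ℝ) : n → ℝ :=
  A *ᵥ p + (h ⬝ᵥ p) • N *ᵥ p

/-- The Schur complement `-(W Aᵀ + A W + ε N W Nᵀ + ε⁻¹ (W h)(W h)ᵀ)` of the scalar block of the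
negated linear matrix inequality. Its quadratic form at `W⁻¹ p` bounds from below the decay rate of
`pᵀ W⁻¹ p` along `bilinearField A N h` on the unit ellipsoid. -/
noncomputable def dissipationMatrix (A N W : Matrix n n ℝ) (h : n → ℝ) (ε : ℝ) : Matrix n n ℝ :=
  -(W * Aᵀ + A * W + ε • (N * W * Nᵀ) + ε⁻¹ • vecMulVec (W *ᵥ h) (W *ᵥ h))

variable {A N W : Matrix n n ℝ} {h : n → ℝ} {ε : ℝ}

lemma posDef_dissipationMatrix_of_lmi (hW : W.IsSymm)
    (hLMI : (-(fromBlocks (W * Aᵀ + A * W + ε • (N * W * Nᵀ))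
        (of fun i (_ : Fin 1) => (W *ᵥ h) i)
        (of fun (_ : Fin 1) j => (h ᵥ* W) j)
        (of fun (_ : Fin 1) (_ : Fin 1) => -ε))).PosDef) :
    (dissipationMatrix A N W h ε).PosDef := by
  have hrow : h ᵥ* W = W *ᵥ h := by rw [← mulVec_transpose, hW.eq]
  have hblocks : (fromBlocks (-(W * Aᵀ + A * W + ε • (N * W * Nᵀ)))
      (replicateCol (Fin 1) (-(W *ᵥ h))) (replicateRow (Fin 1) (-(W *ᵥ h)))
      (of fun _ _ => ε)).PosDef := by
    convert hLMI using 1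
    rw [fromBlocks_neg, hrow]
    congr 1
    ext i j
    simp
  have hschur := posDef_sub_inv_smul_vecMulVec_of_posDef_fromBlocks hblocks
  rwa [neg_vecMulVec, vecMulVec_neg, neg_neg, ← neg_add'] at hschur

lemma dotProduct_dissipationMatrix_mulVec (hW : W.IsSymm) (q : n → ℝ) :
    q ⬝ᵥ dissipationMatrix A N W h ε *ᵥ q =
      -(2 * (q ⬝ᵥ A *ᵥ W *ᵥ q) + ε * (Nᵀ *ᵥ q ⬝ᵥ W *ᵥ Nᵀ *ᵥ q) + ε⁻¹ * (h ⬝ᵥ W *ᵥ q) ^ 2) := by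
  have hdrift : q ⬝ᵥ W *ᵥ Aᵀ *ᵥ q = q ⬝ᵥ A *ᵥ W *ᵥ q := by
    rw [dotProduct_mulVec_comm_of_isSymm hW, mulVec_transpose, dotProduct_mulVec q]
  have hbilinear : q ⬝ᵥ N *ᵥ W *ᵥ Nᵀ *ᵥ q = Nᵀ *ᵥ q ⬝ᵥ W *ᵥ Nᵀ *ᵥ q := by
    rw [dotProduct_mulVec q, ← mulVec_transpose]
  have hfeedback : W *ᵥ h ⬝ᵥ q = h ⬝ᵥ W *ᵥ q := by
    rw [dotProduct_comm, dotProduct_mulVec_comm_of_isSymm hW]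
  simp only [dissipationMatrix, neg_mulVec, add_mulVec, smul_mulVec, ← mulVec_mulVec,
    vecMulVec_mulVec, dotProduct_neg, dotProduct_add, dotProduct_smul, hdrift, hbilinear,
    hfeedback, dotProduct_comm q (W *ᵥ h), smul_eq_mul, op_smul_eq_smul]
  ring

lemma two_mul_dotProduct_bilinearField_le (hW : W.PosSemidef) (hε : 0 < ε) {q : n → ℝ}
    (hq : q ⬝ᵥ W *ᵥ q ≤ 1) :
    2 * (q ⬝ᵥ bilinearField A N h (W *ᵥ q)) ≤ -(q ⬝ᵥ dissipationMatrix A N W h ε *ᵥ q) := by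
  set s := h ⬝ᵥ W *ᵥ q with hs
  have hfield : q ⬝ᵥ bilinearField A N h (W *ᵥ q) =
      q ⬝ᵥ A *ᵥ W *ᵥ q + Nᵀ *ᵥ q ⬝ᵥ W *ᵥ (s • q) := by
    simp only [bilinearField, dotProduct_add, dotProduct_smul, mulVec_smul, ← hs,
      dotProduct_mulVec q N, mulVec_transpose]
  have hyoung := two_mul_dotProduct_mulVec_le hW hε (Nᵀ *ᵥ q) (s • q)
  have hellipsoid : ε⁻¹ * (s • q ⬝ᵥ W *ᵥ (s • q)) ≤ ε⁻¹ * s ^ 2 := by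
    calc ε⁻¹ * (s • q ⬝ᵥ W *ᵥ (s • q)) = ε⁻¹ * s ^ 2 * (q ⬝ᵥ W *ᵥ q) := by
          simp only [mulVec_smul, smul_dotProduct, dotProduct_smul, smul_eq_mul]
          ring
      _ ≤ ε⁻¹ * s ^ 2 := mul_le_of_le_one_right (by positivity) hq
  rw [dotProduct_dissipationMatrix_mulVec (isHermitian_iff_isSymm.1 hW.isHermitian), hfield, ← hs]
  linarith

theorem tendsto_zero_of_posDef_dissipationMatrix [DecidableEq n] (hW : W.PosDef) (hε : 0 < ε)
    (hQ : (dissipationMatrix A N W h ε).PosDef) {p : ℝ → n → ℝ}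
    (hp : ∀ t ≥ 0, HasDerivWithinAt p (bilinearField A N h (p t)) (Ici 0) t)
    (h0 : p 0 ⬝ᵥ W⁻¹ *ᵥ p 0 ≤ 1) : Tendsto p atTop (𝓝 0) := by
  obtain ⟨c, hc, hrate⟩ := exists_pos_mul_dotProduct_mulVec_le hQ W
  refine tendsto_zero_of_lyapunov_decay hW.inv hc one_pos (fun x hx => ?_) hp h0
  obtain ⟨q, rfl⟩ : ∃ q, W *ᵥ q = x := mulVec_surjective_iff_isUnit.2 hW.isUnit x
  have hinv : W⁻¹ *ᵥ W *ᵥ q = q := by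
    rw [mulVec_mulVec, nonsing_inv_mul _ ((isUnit_iff_isUnit_det W).1 hW.isUnit), one_mulVec]
  rw [hinv, dotProduct_comm (W *ᵥ q)] at hx ⊢
  linarith [two_mul_dotProduct_bilinearField_le (A := A) (N := N) (h := h) hW.posSemidef hε hx,
    hrate q]

end Bilinear

section ClosedLoop

variable {m ν l r : Type*} [Fintype m] [Fintype ν] [Fintype l] [Fintype r]
  {A N : Matrix m m ℝ} {B : m → ℝ} {C : Matrix l m ℝ} {S : Matrix r r ℝ} {E : r → ℝ}
  {F : Matrix ν ν ℝ} {G : Matrix ν l ℝ} {H : ν → ℝ} {Γ : l → ℝ} {Sg : Matrix ν r ℝ}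

lemma input_eq_dotProduct_error (hHE : H ᵥ* Sg + E = 0) (x : m → ℝ) (y : ν → ℝ) (v : r → ℝ) :
    H ⬝ᵥ y + Γ ⬝ᵥ C *ᵥ x + E ⬝ᵥ v =
      Sum.elim (Γ ᵥ* C) H ⬝ᵥ Sum.elim x (y - Sg *ᵥ v) := by
  rw [eq_neg_of_add_eq_zero_right hHE, sumElim_dotProduct_sumElim, dotProduct_sub,
    neg_dotProduct, dotProduct_mulVec Γ, dotProduct_mulVec H]
  ring

lemma bilinearField_closedLoop (x : m → ℝ) (e : ν → ℝ) :
    bilinearField (fromBlocks (A + vecMulVec B (Γ ᵥ* C)) (vecMulVec B H) (G * C) F)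
        (fromBlocks N 0 0 0) (Sum.elim (Γ ᵥ* C) H) (Sum.elim x e) =
      Sum.elim
        (A *ᵥ x + (Sum.elim (Γ ᵥ* C) H ⬝ᵥ Sum.elim x e) • B
          + (Sum.elim (Γ ᵥ* C) H ⬝ᵥ Sum.elim x e) • N *ᵥ x)
        (F *ᵥ e + G *ᵥ C *ᵥ x) := by
  ext (i | i)
  · simp only [bilinearField, fromBlocks_mulVec, Sum.elim_comp_inl, Sum.elim_comp_inr, Sum.elim_inl,
      sumElim_dotProduct_sumElim, add_mulVec, zero_mulVec, vecMulVec_mulVec, op_smul_eq_smul,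
      add_zero, Pi.add_apply, Pi.smul_apply, smul_eq_mul]
    ring
  · simp [bilinearField, fromBlocks_mulVec, mulVec_mulVec, add_comm]

lemma hasDerivWithinAt_error (hIM : Sg * S = F * Sg) (hHE : H ᵥ* Sg + E = 0)
    {z : ℝ → m → ℝ} {ξ : ℝ → ν → ℝ} {w : ℝ → r → ℝ} {s : Set ℝ} {t : ℝ}
    (hz : HasDerivWithinAt z (A *ᵥ z t
      + (H ⬝ᵥ ξ t + Γ ⬝ᵥ C *ᵥ z t + E ⬝ᵥ w t) • B
      + (H ⬝ᵥ ξ t + Γ ⬝ᵥ C *ᵥ z t + E ⬝ᵥ w t) • N *ᵥ z t) s t)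
    (hξ : HasDerivWithinAt ξ (F *ᵥ ξ t + G *ᵥ C *ᵥ z t) s t)
    (hw : HasDerivWithinAt w (S *ᵥ w t) s t) :
    HasDerivWithinAt (fun t => Sum.elim (z t) (ξ t - Sg *ᵥ w t))
      (bilinearField (fromBlocks (A + vecMulVec B (Γ ᵥ* C)) (vecMulVec B H) (G * C) F)
        (fromBlocks N 0 0 0) (Sum.elim (Γ ᵥ* C) H) (Sum.elim (z t) (ξ t - Sg *ᵥ w t))) s t := by
  have he : HasDerivWithinAt (fun t => ξ t - Sg *ᵥ w t)
      (F *ᵥ (ξ t - Sg *ᵥ w t) + G *ᵥ C *ᵥ z t) s t := by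
    have hcancel : F *ᵥ (ξ t - Sg *ᵥ w t) + G *ᵥ C *ᵥ z t =
        F *ᵥ ξ t + G *ᵥ C *ᵥ z t - Sg *ᵥ S *ᵥ w t := by
      rw [mulVec_sub, mulVec_mulVec _ F, mulVec_mulVec _ Sg, hIM]
      abel
    rw [hcancel]
    exact hξ.sub (hasDerivWithinAt_mulVec Sg hw)
  rw [input_eq_dotProduct_error hHE] at hz
  rw [bilinearField_closedLoop, hasDerivWithinAt_pi]
  rintro (i | i)
  · exact hasDerivWithinAt_pi.1 hz i
  · exact hasDerivWithinAt_pi.1 he i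

end ClosedLoop

/-- Proposition 1: under the internal model condition `Σ S = F Σ`, the design
choice `H Σ + E = 0`, and the LMI condition
`[[W A_cᵀ + A_c W + ε Ñ W Ñᵀ, W H̃ᵀ],[H̃ W, −ε]] ≺ 0`, the linear dynamic
output feedback controller solves the regional bilinear output regulation
problem: the closed-loop error `(z, ξ − Σw)` converges to zero for any initial
condition in the ellipsoid `{p : pᵀ W⁻¹ p ≤ 1}`, and in particular
`y(t) = C z(t) → 0`. -/
theorem regional_bilinear_output_regulation
    (M ν l r : ℕ)
    (A N : Matrix (Fin M) (Fin M) ℝ) (B : Fin M → ℝ) (C : Matrix (Fin l) (Fin M) ℝ)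
    (S : Matrix (Fin r) (Fin r) ℝ) (E : Fin r → ℝ)
    (F : Matrix (Fin ν) (Fin ν) ℝ) (G : Matrix (Fin ν) (Fin l) ℝ)
    (H : Fin ν → ℝ) (Γ : Fin l → ℝ)
    (Ac : Matrix (Fin M ⊕ Fin ν) (Fin M ⊕ Fin ν) ℝ)
    (hAc : Ac = Matrix.fromBlocks
      (A + Matrix.vecMulVec B (Matrix.vecMul Γ C)) (Matrix.vecMulVec B H) (G * C) F)
    (Nt : Matrix (Fin M ⊕ Fin ν) (Fin M ⊕ Fin ν) ℝ)
    (hNt : Nt = Matrix.fromBlocks N 0 0 0)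
    (Ht : Fin M ⊕ Fin ν → ℝ)
    (hHt : Ht = Sum.elim (Matrix.vecMul Γ C) H)
    -- condition (1): internal model principle
    (Sg : Matrix (Fin ν) (Fin r) ℝ)
    (hIM : Sg * S = F * Sg)
    -- condition (2)
    (hHE : Matrix.vecMul H Sg + E = 0)
    -- condition (3): the LMI
    (ε : ℝ) (hε : 0 < ε)
    (W : Matrix (Fin M ⊕ Fin ν) (Fin M ⊕ Fin ν) ℝ) (hW : W.PosDef)
    (hLMI : (-(Matrix.fromBlocks (W * Acᵀ + Ac * W + ε • (Nt * W * Ntᵀ))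
        (Matrix.of fun i (_ : Fin 1) => W.mulVec Ht i)
        (Matrix.of fun (_ : Fin 1) j => Matrix.vecMul Ht W j)
        (Matrix.of fun (_ : Fin 1) (_ : Fin 1) => -ε))).PosDef)
    -- closed-loop trajectory on [0, ∞)
    (z : ℝ → Fin M → ℝ) (ξ : ℝ → Fin ν → ℝ) (w : ℝ → Fin r → ℝ)
    (hz : ∀ t, 0 ≤ t → HasDerivAt z (A.mulVec (z t)
      + (H ⬝ᵥ ξ t + Γ ⬝ᵥ C.mulVec (z t) + E ⬝ᵥ w t) • B
      + (H ⬝ᵥ ξ t + Γ ⬝ᵥ C.mulVec (z t) + E ⬝ᵥ w t) • N.mulVec (z t)) t)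
    (hξ : ∀ t, 0 ≤ t → HasDerivAt ξ (F.mulVec (ξ t) + G.mulVec (C.mulVec (z t))) t)
    (hw : ∀ t, 0 ≤ t → HasDerivAt w (S.mulVec (w t)) t)
    -- initial condition in the ellipsoid
    (h0 : Sum.elim (z 0) (ξ 0 - Sg.mulVec (w 0)) ⬝ᵥ
      W⁻¹.mulVec (Sum.elim (z 0) (ξ 0 - Sg.mulVec (w 0))) ≤ 1) :
    Filter.Tendsto (fun t => Sum.elim (z t) (ξ t - Sg.mulVec (w t)))
      Filter.atTop (nhds 0) ∧
    Filter.Tendsto (fun t => C.mulVec (z t)) Filter.atTop (nhds 0) := by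
  subst hAc hNt hHt
  have hWsymm : W.IsSymm := isHermitian_iff_isSymm.1 hW.isHermitian
  have herror : Filter.Tendsto (fun t => Sum.elim (z t) (ξ t - Sg.mulVec (w t)))
      Filter.atTop (nhds 0) :=
    tendsto_zero_of_posDef_dissipationMatrix hW hε (posDef_dissipationMatrix_of_lmi hWsymm hLMI)
      (fun t ht => hasDerivWithinAt_error hIM hHE (hz t ht).hasDerivWithinAt
        (hξ t ht).hasDerivWithinAt (hw t ht).hasDerivWithinAt) h0
  have hstate : Filter.Tendsto z Filter.atTop (nhds 0) :=
    tendsto_pi_nhds.2 fun i => tendsto_pi_nhds.1 herror (Sum.inl i)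
  have houtput : Continuous fun x : Fin M → ℝ => C *ᵥ x := by fun_prop
  exact ⟨herror, (houtput.tendsto' 0 0 (mulVec_zero C)).comp hstate⟩
end

section
/- Let κ₁, κ₂ ∈ ℝ, and define f : ℝ² → ℝ² by f(x₁,x₂) = (κ₁ x₁, κ₂(x₂ − x₁²)), g : ℝ² → ℝ² by g(x₁,x₂) = (x₁, 1), and h : ℝ² → ℝ by h(x₁,x₂) = x₂ − x₂³/6. Consider the dictionary of ten observables on ℝ²: ψ₁ = x₁, ψ₂ = x₂, ψ₃ = x₁², ψ₄ = x₂², ψ₅ = x₂³, ψ₆ = x₁²x₂, ψ₇ = x₁⁴, ψ₈ = x₁²x₂², ψ₉ = x₁⁴x₂, ψ₁₀ = x₁⁶. Then: (1) for each i ∈ {1,…,10}, the function (x₁,x₂) ↦ ∇ψᵢ(x₁,x₂)·f(x₁,x₂) lies in the real linear span of {ψ₁,…,ψ₁₀}; (2) for each i ∈ {1,…,10}, the function (x₁,x₂) ↦ ∇ψᵢ(x₁,x₂)·g(x₁,x₂) lies in the real linear span of the constant function 1 together with {ψ₁,…,ψ₁₀}; (3) h lies in the real linear span of {ψ₁,…,ψ₁₀};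 (4) the coordinate functions x₁ and x₂ lie in the span of {ψ₁,…,ψ₁₀}. -/
open Matrix

/-!
Give the monomial `x₁ ^ a * x₂ ^ b` the exponent `(a, b)`. Differentiating it along the drift `f`
produces only the exponents `(a, b)` and, if `b ≠ 0`, `(a + 2, b - 1)`; differentiating it along the
input field `g` produces only `(a, b)` and, if `b ≠ 0`, `(a, b - 1)`. The dictionary consists of
`x₁` and of all monomials `(x₁ ^ 2) ^ j * x₂ ^ b` with `1 ≤ j + b ≤ 3`. The first move preserves
`j + b` and the second lowers it by one, so the only exponent outside the dictionary that can
arise is `(0, 0)`, from the input derivative of `x₂`.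
-/

section PlanarMonomial

variable {R : Type*} [CommSemiring R]

/-- The monomial function `x ↦ x₁ ^ a * x₂ ^ b` on the plane with exponent `p = (a, b)`; the
coordinates `x₁`, `x₂` are `x 0`, `x 1`. -/
def planarMonomial (p : ℕ × ℕ) (x : Fin 2 → R) : R :=
  x 0 ^ p.1 * x 1 ^ p.2

theorem planarMonomial_zero : planarMonomial (0, 0) = fun _ : Fin 2 → R => (1 : R) := by
  funext x
  simp [planarMonomial]

theorem natCast_mul_fst_mul_planarMonomial_pred (p : ℕ × ℕ) (x : Fin 2 → R) :
    p.1 * x 0 * planarMonomial (p.1 - 1, p.2) x = p.1 * planarMonomial p x := by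
  obtain ⟨_ | a, b⟩ := p
  · simp
  · simp only [planarMonomial, Nat.add_sub_cancel]
    ring

theorem natCast_mul_snd_mul_planarMonomial_pred (p : ℕ × ℕ) (x : Fin 2 → R) :
    p.2 * x 1 * planarMonomial (p.1, p.2 - 1) x = p.2 * planarMonomial p x := by
  obtain ⟨a, _ | b⟩ := p
  · simp
  · simp only [planarMonomial, Nat.add_sub_cancel]
    ring

theorem planarMonomial_add_fst (a b n : ℕ) (x : Fin 2 → R) :
    planarMonomial (a + n, b) x = x 0 ^ n * planarMonomial (a, b) x := by
  simp only [planarMonomial]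
  ring

theorem smul_planarMonomial_mem_span {S : Set (ℕ × ℕ)} {p : ℕ × ℕ} (c : R)
    (hp : c ≠ 0 → p ∈ S) :
    c • planarMonomial p ∈ Submodule.span R (planarMonomial (R := R) '' S) := by
  rcases eq_or_ne c 0 with rfl | hc
  · rw [zero_smul]
    exact Submodule.zero_mem _
  · exact Submodule.smul_mem _ _ (Submodule.subset_span (Set.mem_image_of_mem _ (hp hc)))

end PlanarMonomial

section DirectionalDerivative

variable {𝕜 : Type*} [NontriviallyNormedField 𝕜]

theorem fderiv_planarMonomial_apply (p : ℕ × ℕ) (x v : Fin 2 → 𝕜) :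
    fderiv 𝕜 (planarMonomial p) x v =
      p.1 * v 0 * planarMonomial (p.1 - 1, p.2) x +
        p.2 * v 1 * planarMonomial (p.1, p.2 - 1) x := by
  have hasFDerivAt_monomial : HasFDerivAt (planarMonomial p) _ x :=
    ((hasFDerivAt_apply (𝕜 := 𝕜) (0 : Fin 2) x).pow p.1).mul
      ((hasFDerivAt_apply (𝕜 := 𝕜) (1 : Fin 2) x).pow p.2)
  rw [hasFDerivAt_monomial.fderiv]
  simp only [planarMonomial, _root_.add_apply, _root_.smul_apply,
    ContinuousLinearMap.proj_apply, smul_eq_mul, nsmul_eq_mul]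
  ring

theorem fderiv_planarMonomial_drift (κ₁ κ₂ : 𝕜) (n : ℕ) (p : ℕ × ℕ) (x : Fin 2 → 𝕜) :
    fderiv 𝕜 (planarMonomial p) x ![κ₁ * x 0, κ₂ * (x 1 - x 0 ^ n)] =
      (p.1 * κ₁ + p.2 * κ₂) * planarMonomial p x -
        p.2 * κ₂ * planarMonomial (p.1 + n, p.2 - 1) x := by
  rw [fderiv_planarMonomial_apply, planarMonomial_add_fst, cons_val_zero, cons_val_one,
    cons_val_fin_one]
  linear_combination κ₁ * natCast_mul_fst_mul_planarMonomial_pred p x +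
    κ₂ * natCast_mul_snd_mul_planarMonomial_pred p x

theorem fderiv_planarMonomial_input (p : ℕ × ℕ) (x : Fin 2 → 𝕜) :
    fderiv 𝕜 (planarMonomial p) x ![x 0, 1] =
      p.1 * planarMonomial p x + p.2 * planarMonomial (p.1, p.2 - 1) x := by
  rw [fderiv_planarMonomial_apply, cons_val_zero, cons_val_one, cons_val_fin_one,
    natCast_mul_fst_mul_planarMonomial_pred, mul_one]

variable {S : Set (ℕ × ℕ)} {p : ℕ × ℕ}

theorem fderiv_planarMonomial_drift_mem_span (κ₁ κ₂ : 𝕜) {n : ℕ} (hp : p ∈ S)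
    (hshift : p.2 ≠ 0 → (p.1 + n, p.2 - 1) ∈ S) :
    (fun x => fderiv 𝕜 (planarMonomial p) x ![κ₁ * x 0, κ₂ * (x 1 - x 0 ^ n)]) ∈
      Submodule.span 𝕜 (planarMonomial (R := 𝕜) '' S) := by
  simp only [fderiv_planarMonomial_drift]
  exact Submodule.sub_mem _
    (smul_planarMonomial_mem_span (p.1 * κ₁ + p.2 * κ₂) fun _ => hp)
    (smul_planarMonomial_mem_span (p.2 * κ₂) fun hc => hshift fun hb => hc (by simp [hb]))

theorem fderiv_planarMonomial_input_mem_span (hp : p ∈ S)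
    (hlower : p.2 ≠ 0 → (p.1, p.2 - 1) ∈ S) :
    (fun x => fderiv 𝕜 (planarMonomial p) x ![x 0, 1]) ∈
      Submodule.span 𝕜 (planarMonomial (R := 𝕜) '' S) := by
  simp only [fderiv_planarMonomial_input]
  exact Submodule.add_mem _
    (smul_planarMonomial_mem_span (p.1 : 𝕜) fun _ => hp)
    (smul_planarMonomial_mem_span (p.2 : 𝕜) fun hc => hlower fun hb => hc (by simp [hb]))

end DirectionalDerivative

/-- The exponents of the ten observables, listed in the order of the dictionary `ψ₁, …, ψ₁₀`. -/
def dictionaryExponent : Fin 10 → ℕ × ℕ :=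
  ![(1, 0), (0, 1), (2, 0), (0, 2), (0, 3), (2, 1), (4, 0), (2, 2), (4, 1), (6, 0)]

theorem planarMonomial_comp_dictionaryExponent {R : Type*} [CommSemiring R] :
    planarMonomial (R := R) ∘ dictionaryExponent =
      ![fun x => x 0, fun x => x 1, fun x => x 0 ^ 2, fun x => x 1 ^ 2, fun x => x 1 ^ 3,
        fun x => x 0 ^ 2 * x 1, fun x => x 0 ^ 4, fun x => x 0 ^ 2 * x 1 ^ 2,
        fun x => x 0 ^ 4 * x 1, fun x => x 0 ^ 6] := by
  funext i x
  fin_cases i <;> simp [planarMonomial, dictionaryExponent]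

theorem dictionaryExponent_shift_mem_range (i : Fin 10) (hi : (dictionaryExponent i).2 ≠ 0) :
    ((dictionaryExponent i).1 + 2, (dictionaryExponent i).2 - 1) ∈
      Set.range dictionaryExponent := by
  revert i
  decide

theorem dictionaryExponent_lower_mem_insert (i : Fin 10) (hi : (dictionaryExponent i).2 ≠ 0) :
    ((dictionaryExponent i).1, (dictionaryExponent i).2 - 1) ∈
      insert (0, 0) (Set.range dictionaryExponent) := by
  revert i
  decide

/-- The ten-observable dictionary of the example system satisfies the four
hypotheses of Lemma 1: invariance of the drift directional derivatives,
affine-in-dictionary input directional derivatives, output in the span, and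
state components in the span. -/
theorem example_dictionary_satisfies_lemma1
    (κ1 κ2 : ℝ)
    (f g : (Fin 2 → ℝ) → (Fin 2 → ℝ))
    (h : (Fin 2 → ℝ) → ℝ)
    (hf : f = fun x => ![κ1 * x 0, κ2 * (x 1 - (x 0) ^ 2)])
    (hg : g = fun x => ![x 0, 1])
    (hh : h = fun x => x 1 - (x 1) ^ 3 / 6)
    (ψ : Fin 10 → (Fin 2 → ℝ) → ℝ)
    (hψ : ψ = ![fun x => x 0, fun x => x 1, fun x => (x 0) ^ 2,
      fun x => (x 1) ^ 2, fun x => (x 1) ^ 3, fun x => (x 0) ^ 2 * x 1,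
      fun x => (x 0) ^ 4, fun x => (x 0) ^ 2 * (x 1) ^ 2,
      fun x => (x 0) ^ 4 * x 1, fun x => (x 0) ^ 6]) :
    (∀ i : Fin 10,
      (fun x => fderiv ℝ (ψ i) x (f x)) ∈ Submodule.span ℝ (Set.range ψ)) ∧
    (∀ i : Fin 10,
      (fun x => fderiv ℝ (ψ i) x (g x)) ∈
        Submodule.span ℝ (insert (fun _ => (1 : ℝ)) (Set.range ψ))) ∧
    (h ∈ Submodule.span ℝ (Set.range ψ)) ∧
    ((fun x : Fin 2 → ℝ => x 0) ∈ Submodule.span ℝ (Set.range ψ) ∧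
     (fun x : Fin 2 → ℝ => x 1) ∈ Submodule.span ℝ (Set.range ψ)) := by
  have ψ_eq : ψ = planarMonomial ∘ dictionaryExponent :=
    hψ.trans planarMonomial_comp_dictionaryExponent.symm
  have range_ψ : Set.range ψ = planarMonomial '' Set.range dictionaryExponent := by
    rw [ψ_eq, Set.range_comp]
  have x₁_mem : (fun x => x 0) ∈ Submodule.span ℝ (Set.range ψ) :=
    Submodule.subset_span ⟨0, by rw [hψ]; rfl⟩
  have x₂_mem : (fun x => x 1) ∈ Submodule.span ℝ (Set.range ψ) :=
    Submodule.subset_span ⟨1, by rw [hψ]; rfl⟩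
  have x₂_cubed_mem : (fun x => x 1 ^ 3) ∈ Submodule.span ℝ (Set.range ψ) :=
    Submodule.subset_span ⟨4, by rw [hψ]; rfl⟩
  refine ⟨fun i => ?_, fun i => ?_, ?_, x₁_mem, x₂_mem⟩
  · rw [range_ψ, ψ_eq, hf]
    exact fderiv_planarMonomial_drift_mem_span κ1 κ2 (Set.mem_range_self i)
      (dictionaryExponent_shift_mem_range i)
  · rw [range_ψ, ψ_eq, hg, ← planarMonomial_zero, ← Set.image_insert_eq]
    exact fderiv_planarMonomial_input_mem_span (Set.mem_insert_of_mem _ (Set.mem_range_self i))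
      (dictionaryExponent_lower_mem_insert i)
  · simp only [hh, div_eq_inv_mul]
    exact Submodule.sub_mem _ x₂_mem (Submodule.smul_mem _ 6⁻¹ x₂_cubed_mem)
end
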